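/- Let L ∈ 𝒩. Then there exist λ ∈ ℂ and three times continuously differentiable functions θ, u : [0,L] → ℂ, not both identically zero, satisfying −u′(x) − u‴(x) = λ·θ(x) and −θ′(x) − θ‴(x) = λ·u(x) for all x ∈ [0,L], the boundary conditions θ(0) = θ(L) = θ′(0) = θ′(L) = 0 and u(0) = u(L) = u′(L) = 0, and additionally θ″(0) = 0. -/

import Mathlib

open Set

/-- The set 𝒩 = { (2π/√3)·√(k² + k·l + l²) : k, l positive integers } of critical lengths. -/
def criticalN : Set ℝ :=
  {x | ∃ k l : ℕ, 0 < k ∧ 0 < l ∧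
    x = (2 * Real.pi / Real.sqrt 3) * Real.sqrt ((k : ℝ)^2 + (k : ℝ) * (l : ℝ) + (l : ℝ)^2)}

/-!
The operator `D = -∂ - ∂³` reverses parity, so the odd and even parts `θ`, `u` of a solution of
`D f = lam * f` satisfy `D u = lam * θ` and `D θ = lam * u`, and `θ 0 = θ'' 0 = 0` comes for free.
It remains to find such an `f` vanishing together with `f'` at `0`, `L` and `-L`. Rosier's critical
lengths for the KdV equation provide one: for `L ∈ 𝒩` the equation `-μ - μ³ = lam` has, for a
suitable `lam`, three distinct roots `μ j` with a common value `ζ` of `exp (μ j * L)`. Every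
combination `f` of the exponentials `exp (μ j * x)` then satisfies `f (x + L) = ζ * f x`, so only
the two conditions at `0` must be imposed, and three coefficients are enough for that.
-/

lemma eq_zero_and_neg_eq_zero_of_add_eq_mul {G M : Type*} [AddGroup G] [MulZeroClass M]
    [NoZeroDivisors M] {f : G → M} {L : G} {ζ : M} (hζ : ζ ≠ 0)
    (h : ∀ x, f (x + L) = ζ * f x) (h0 : f 0 = 0) : f L = 0 ∧ f (-L) = 0 := by
  constructor
  · rw [← zero_add L, h, h0, mul_zero]
  · have hmul : ζ * f (-L) = 0 := by rw [← h, neg_add_cancel, h0]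
    exact (mul_eq_zero.mp hmul).resolve_left hζ

lemma deriv_add_eq_mul {𝕜 A : Type*} [NontriviallyNormedField 𝕜] [NormedDivisionRing A]
    [NormedAlgebra 𝕜 A] {f : 𝕜 → A} {L : 𝕜} {ζ : A} (h : ∀ x, f (x + L) = ζ * f x) (x : 𝕜) :
    deriv f (x + L) = ζ * deriv f x := by
  rw [← deriv_comp_add_const, funext h, deriv_const_mul_field]

lemma eqOn_deriv_of_eqOn {𝕜 F : Type*} [NontriviallyNormedField 𝕜] [NormedAddCommGroup F]
    [NormedSpace 𝕜 F] {f g : 𝕜 → F} {s : Set 𝕜} (hs : UniqueDiffOn 𝕜 s)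
    (hf : ∀ x ∈ s, DifferentiableAt 𝕜 f x) (hg : ∀ x ∈ s, DifferentiableAt 𝕜 g x)
    (h : EqOn f g s) : EqOn (deriv f) (deriv g) s := fun x hx ↦ by
  rw [← (hf x hx).derivWithin (hs x hx), ← (hg x hx).derivWithin (hs x hx),
    derivWithin_congr h (h hx)]

/-! ### Even and odd parts -/

section Parity

variable {E : Type*}

section Module

variable [AddCommGroup E] [Module ℝ E]

/-- The even part `x ↦ (f x + f (-x)) / 2` of a function on the line; the even part of Rosier's mode
is the component `u` of the eigenfunction. -/
noncomputable def evenPart (f : ℝ → E) (x : ℝ) : E := (2 : ℝ)⁻¹ • (f x + f (-x))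

/-- The odd part `x ↦ (f x - f (-x)) / 2` of a function on the line; the odd part of Rosier's mode
is the component `θ` of the eigenfunction. -/
noncomputable def oddPart (f : ℝ → E) (x : ℝ) : E := (2 : ℝ)⁻¹ • (f x - f (-x))

lemma evenPart_add_oddPart (f : ℝ → E) (x : ℝ) : evenPart f x + oddPart f x = f x := by
  simp only [evenPart, oddPart]
  module

lemma evenPart_zero (f : ℝ → E) : evenPart f 0 = f 0 := by
  simp only [evenPart, neg_zero]
  module

lemma oddPart_zero (f : ℝ → E) : oddPart f 0 = 0 := by
  simp [oddPart]

lemma evenPart_eq_zero {f : ℝ → E} {x : ℝ} (h : f x = 0) (h' : f (-x) = 0) : evenPart f x = 0 := by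
  simp [evenPart, h, h']

lemma oddPart_eq_zero {f : ℝ → E} {x : ℝ} (h : f x = 0) (h' : f (-x) = 0) : oddPart f x = 0 := by
  simp [oddPart, h, h']

variable {R : Type*} [Monoid R] [DistribMulAction R E] [SMulCommClass R ℝ E]

lemma evenPart_smul (r : R) (f : ℝ → E) : evenPart (r • f) = r • evenPart f := by
  funext x
  simp only [evenPart, Pi.smul_apply, ← smul_add, smul_comm r]

lemma oddPart_smul (r : R) (f : ℝ → E) : oddPart (r • f) = r • oddPart f := by
  funext x
  simp only [oddPart, Pi.smul_apply, ← smul_sub, smul_comm r]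

end Module

variable [NormedAddCommGroup E] [NormedSpace ℝ E] {f : ℝ → E}

lemma contDiff_evenPart {n : WithTop ℕ∞} (hf : ContDiff ℝ n f) : ContDiff ℝ n (evenPart f) :=
  (hf.add (hf.comp contDiff_neg)).const_smul _

lemma contDiff_oddPart {n : WithTop ℕ∞} (hf : ContDiff ℝ n f) : ContDiff ℝ n (oddPart f) :=
  (hf.sub (hf.comp contDiff_neg)).const_smul _

lemma deriv_evenPart (hf : Differentiable ℝ f) : deriv (evenPart f) = oddPart (deriv f) := by
  have hneg : Differentiable ℝ fun x ↦ f (-x) := hf.comp differentiable_neg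
  funext x
  have hderiv : HasDerivAt (evenPart f)
      ((2 : ℝ)⁻¹ • (deriv f x + deriv (fun y ↦ f (-y)) x)) x :=
    ((hf x).hasDerivAt.add (hneg x).hasDerivAt).const_smul _
  rw [hderiv.deriv, deriv_comp_neg, ← sub_eq_add_neg, oddPart]

lemma deriv_oddPart (hf : Differentiable ℝ f) : deriv (oddPart f) = evenPart (deriv f) := by
  have hneg : Differentiable ℝ fun x ↦ f (-x) := hf.comp differentiable_neg
  funext x
  have hderiv : HasDerivAt (oddPart f)
      ((2 : ℝ)⁻¹ • (deriv f x - deriv (fun y ↦ f (-y)) x)) x :=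
    ((hf x).hasDerivAt.sub (hneg x).hasDerivAt).const_smul _
  rw [hderiv.deriv, deriv_comp_neg, sub_neg_eq_add, evenPart]

lemma deriv_deriv_evenPart (hf : ContDiff ℝ 2 f) :
    deriv (deriv (evenPart f)) = evenPart (deriv (deriv f)) := by
  rw [deriv_evenPart (hf.differentiable two_ne_zero),
    deriv_oddPart ((hf.deriv' (n := 1)).differentiable one_ne_zero)]

lemma deriv_deriv_oddPart (hf : ContDiff ℝ 2 f) :
    deriv (deriv (oddPart f)) = oddPart (deriv (deriv f)) := by
  rw [deriv_oddPart (hf.differentiable two_ne_zero),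
    deriv_evenPart ((hf.deriv' (n := 1)).differentiable one_ne_zero)]

/-- The operator `-∂ - ∂³` of the linearized KdV equation, which couples the two components of the
linearized Boussinesq system. -/
noncomputable def kdvOp (f : ℝ → E) (x : ℝ) : E := -deriv f x - deriv (deriv (deriv f)) x

lemma kdvOp_evenPart (hf : ContDiff ℝ 3 f) : kdvOp (evenPart f) = oddPart (kdvOp f) := by
  have hf'' : Differentiable ℝ (deriv (deriv f)) :=
    ((hf.deriv' (n := 2)).deriv' (n := 1)).differentiable one_ne_zero
  funext x
  rw [kdvOp, deriv_deriv_evenPart (hf.of_le (by norm_num)), deriv_evenPart hf'',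
    deriv_evenPart (hf.differentiable three_ne_zero)]
  simp only [oddPart, kdvOp]
  module

lemma kdvOp_oddPart (hf : ContDiff ℝ 3 f) : kdvOp (oddPart f) = evenPart (kdvOp f) := by
  have hf'' : Differentiable ℝ (deriv (deriv f)) :=
    ((hf.deriv' (n := 2)).deriv' (n := 1)).differentiable one_ne_zero
  funext x
  rw [kdvOp, deriv_deriv_oddPart (hf.of_le (by norm_num)), deriv_oddPart hf'',
    deriv_oddPart (hf.differentiable three_ne_zero)]
  simp only [evenPart, kdvOp]
  module

variable {R : Type*} [Monoid R] [DistribMulAction R E] [SMulCommClass R ℝ E] {r : R}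

lemma kdvOp_evenPart_of_eq_smul (hf : ContDiff ℝ 3 f) (h : kdvOp f = r • f) :
    kdvOp (evenPart f) = r • oddPart f := by
  rw [kdvOp_evenPart hf, h, oddPart_smul]

lemma kdvOp_oddPart_of_eq_smul (hf : ContDiff ℝ 3 f) (h : kdvOp f = r • f) :
    kdvOp (oddPart f) = r • evenPart f := by
  rw [kdvOp_oddPart hf, h, evenPart_smul]

end Parity

/-! ### Exponential sums -/

section ExpSum

open Complex

variable {ι : Type*} [Fintype ι] {c μ : ι → ℂ}

/-- The exponential sum `∑ j, c j * exp (μ j * x)`, as a function of a real variable: a solution of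
a linear equation with constant coefficients whose characteristic roots are the `μ j`. -/
noncomputable def expSum (c μ : ι → ℂ) (x : ℝ) : ℂ := ∑ j, c j * exp (μ j * x)

lemma expSum_zero (c μ : ι → ℂ) : expSum c μ 0 = ∑ j, c j := by
  simp [expSum]

lemma contDiff_expSum (c μ : ι → ℂ) {n : WithTop ℕ∞} : ContDiff ℝ n (expSum c μ) :=
  ContDiff.sum fun _ _ ↦
    contDiff_const.mul (contDiff_const.mul ofRealCLM.contDiff).cexp

lemma deriv_expSum (c μ : ι → ℂ) : deriv (expSum c μ) = expSum (c * μ) μ := by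
  funext x
  have hexp (j : ι) : HasDerivAt (fun y : ℝ ↦ exp (μ j * y)) (exp (μ j * x) * (μ j * 1)) x :=
    ((hasDerivAt_id (x : ℂ)).const_mul (μ j)).cexp.comp_ofReal
  have hsum : HasDerivAt (expSum c μ) (∑ j, c j * (exp (μ j * x) * (μ j * 1))) x :=
    HasDerivAt.fun_sum fun j _ ↦ (hexp j).const_mul (c j)
  rw [hsum.deriv]
  refine Finset.sum_congr rfl fun j _ ↦ ?_
  rw [Pi.mul_apply]
  ring

lemma kdvOp_expSum {lam : ℂ} (h : ∀ j, -μ j - μ j ^ 3 = lam) :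
    kdvOp (expSum c μ) = lam • expSum c μ := by
  funext x
  simp only [kdvOp, deriv_expSum, expSum, Pi.mul_apply, Pi.smul_apply, smul_eq_mul]
  rw [← Finset.sum_neg_distrib, ← Finset.sum_sub_distrib, Finset.mul_sum]
  refine Finset.sum_congr rfl fun j _ ↦ ?_
  rw [← h j]
  ring

lemma expSum_add {L : ℝ} {ζ : ℂ} (h : ∀ j, exp (μ j * L) = ζ) (x : ℝ) :
    expSum c μ (x + L) = ζ * expSum c μ x := by
  simp only [expSum, Finset.mul_sum, ofReal_add, mul_add, exp_add, h]
  exact Finset.sum_congr rfl fun j _ ↦ by ring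

end ExpSum

/-! ### Rosier's modes -/

section Rosier

open Complex

/-- The characteristic roots of Rosier's mode, up to a common factor. They sum to zero, they are
congruent modulo `3`, and their second elementary symmetric function is
`-3 * (k ^ 2 + k * l + l ^ 2)`. -/
def rosierNode (k l : ℤ) : Fin 3 → ℤ := ![-(2 * k + l), k - l, k + 2 * l]

/-- The coefficients of Rosier's mode: the weight of a node is a third of the difference of the
other two, so that the weights annihilate affine functions of the nodes. -/
def rosierWeight (k l : ℤ) : Fin 3 → ℤ := ![l, -(k + l), k]

lemma sum_rosierWeight (k l : ℤ) : ∑ j, rosierWeight k l j = 0 := by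
  simp only [rosierWeight, Fin.sum_univ_three, Matrix.cons_val]
  ring

lemma sum_rosierWeight_mul_rosierNode (k l : ℤ) :
    ∑ j, rosierWeight k l j * rosierNode k l j = 0 := by
  simp only [rosierWeight, rosierNode, Fin.sum_univ_three, Matrix.cons_val]
  ring

lemma sum_rosierWeight_mul_rosierNode_sq (k l : ℤ) :
    ∑ j, rosierWeight k l j * rosierNode k l j ^ 2 = 9 * (k * l * (k + l)) := by
  simp only [rosierWeight, rosierNode, Fin.sum_univ_three, Matrix.cons_val]
  ring

lemma rosierNode_pow_three (k l : ℤ) (j : Fin 3) :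
    rosierNode k l j ^ 3 =
      3 * (k ^ 2 + k * l + l ^ 2) * rosierNode k l j + ∏ i, rosierNode k l i := by
  fin_cases j <;> simp [rosierNode, Fin.prod_univ_three] <;> ring

lemma exists_rosierNode_eq_add_three_mul (k l : ℤ) (j : Fin 3) :
    ∃ t, rosierNode k l j = k - l + 3 * t := by
  refine ⟨![-k, 0, l] j, ?_⟩
  fin_cases j <;> simp [rosierNode] <;> ring

/-- The characteristic roots `2πi n / (3L)`, with `n` running over `rosierNode k l`, of Rosier's
mode on an interval of length `L`. -/
noncomputable def rosierRoot (k l : ℤ) (L : ℝ) (j : Fin 3) : ℂ :=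
  2 * Real.pi * I / (3 * L) * rosierNode k l j

/-- Rosier's mode: the eigenfunction of `f ↦ -f' - f'''` showing that the linearized KdV equation is
not controllable on an interval of critical length `L`. -/
noncomputable def rosierMode (k l : ℤ) (L : ℝ) : ℝ → ℂ :=
  expSum (fun j ↦ (rosierWeight k l j : ℂ)) (rosierRoot k l L)

/-- The eigenvalue `lam` of Rosier's mode, namely minus the product of its characteristic roots. -/
noncomputable def rosierEigenvalue (k l : ℤ) (L : ℝ) : ℂ := -∏ j, rosierRoot k l L j

lemma rosierRoot_char_eq {k l : ℤ} {L : ℝ} (hL : L ≠ 0)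
    (h : 3 * L ^ 2 = 4 * Real.pi ^ 2 * (k ^ 2 + k * l + l ^ 2)) (j : Fin 3) :
    -rosierRoot k l L j - rosierRoot k l L j ^ 3 = rosierEigenvalue k l L := by
  have hnode : (rosierNode k l j : ℂ) ^ 3 =
      3 * (k ^ 2 + k * l + l ^ 2) * rosierNode k l j + ∏ i, (rosierNode k l i : ℂ) := by
    exact_mod_cast rosierNode_pow_three k l j
  have hfactor : 3 * (2 * Real.pi * I / (3 * L)) ^ 2 * ((k : ℂ) ^ 2 + k * l + l ^ 2) = -1 := by
    have hLc : (L : ℂ) ≠ 0 := ofReal_ne_zero.mpr hL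
    have hc : 3 * (L : ℂ) ^ 2 = 4 * Real.pi ^ 2 * (k ^ 2 + k * l + l ^ 2) := by exact_mod_cast h
    field_simp
    rw [I_sq]
    linear_combination hc
  simp only [rosierEigenvalue, rosierRoot, Finset.prod_mul_distrib, Finset.prod_const,
    Finset.card_univ, Fintype.card_fin]
  linear_combination -(2 * Real.pi * I / (3 * L)) ^ 3 * hnode -
    2 * Real.pi * I / (3 * L) * rosierNode k l j * hfactor

lemma exp_rosierRoot_mul (k l : ℤ) {L : ℝ} (hL : L ≠ 0) (j : Fin 3) :
    exp (rosierRoot k l L j * L) = exp (2 * Real.pi * I / 3 * (k - l)) := by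
  have hLc : (L : ℂ) ≠ 0 := ofReal_ne_zero.mpr hL
  obtain ⟨t, ht⟩ := exists_rosierNode_eq_add_three_mul k l j
  have hsplit : rosierRoot k l L j * L =
      2 * Real.pi * I / 3 * (k - l) + t * (2 * Real.pi * I) := by
    simp only [rosierRoot, ht, Int.cast_add, Int.cast_sub, Int.cast_mul, Int.cast_ofNat]
    field_simp
  rw [hsplit, exp_add, exp_int_mul_two_pi_mul_I, mul_one]

lemma contDiff_rosierMode (k l : ℤ) (L : ℝ) {n : WithTop ℕ∞} : ContDiff ℝ n (rosierMode k l L) :=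
  contDiff_expSum _ _

lemma kdvOp_rosierMode {k l : ℤ} {L : ℝ} (hL : L ≠ 0)
    (h : 3 * L ^ 2 = 4 * Real.pi ^ 2 * (k ^ 2 + k * l + l ^ 2)) :
    kdvOp (rosierMode k l L) = rosierEigenvalue k l L • rosierMode k l L :=
  kdvOp_expSum (rosierRoot_char_eq hL h)

lemma rosierMode_zero (k l : ℤ) (L : ℝ) : rosierMode k l L 0 = 0 := by
  rw [rosierMode, expSum_zero]
  exact_mod_cast sum_rosierWeight k l

lemma deriv_rosierMode_zero (k l : ℤ) (L : ℝ) : deriv (rosierMode k l L) 0 = 0 := by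
  have hsum : ∑ j, (rosierWeight k l j : ℂ) * rosierNode k l j = 0 := by
    exact_mod_cast sum_rosierWeight_mul_rosierNode k l
  simp only [rosierMode, deriv_expSum, expSum_zero, Pi.mul_apply, rosierRoot]
  rw [← mul_zero (2 * Real.pi * I / (3 * L)), ← hsum, Finset.mul_sum]
  exact Finset.sum_congr rfl fun j _ ↦ mul_left_comm _ _ _

lemma deriv_deriv_rosierMode_zero (k l : ℤ) (L : ℝ) :
    deriv (deriv (rosierMode k l L)) 0 =
      (2 * Real.pi * I / (3 * L)) ^ 2 * (9 * (k * l * (k + l))) := by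
  have hsum : ∑ j, (rosierWeight k l j : ℂ) * rosierNode k l j ^ 2 = 9 * (k * l * (k + l)) := by
    exact_mod_cast sum_rosierWeight_mul_rosierNode_sq k l
  simp only [rosierMode, deriv_expSum, expSum_zero, Pi.mul_apply, rosierRoot]
  rw [← hsum, Finset.mul_sum]
  exact Finset.sum_congr rfl fun j _ ↦ by ring

lemma exists_rosierMode_add (k l : ℤ) {L : ℝ} (hL : L ≠ 0) :
    ∃ ζ : ℂ, ζ ≠ 0 ∧ ∀ x, rosierMode k l L (x + L) = ζ * rosierMode k l L x :=
  ⟨_, exp_ne_zero _, expSum_add (exp_rosierRoot_mul k l hL)⟩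

lemma exists_rosierMode_ne_zero {k l : ℤ} (hk : k ≠ 0) (hl : l ≠ 0) (hkl : k + l ≠ 0) {L : ℝ}
    (hL : 0 < L) : ∃ x ∈ Icc 0 L, rosierMode k l L x ≠ 0 := by
  by_contra! h
  have hs : UniqueDiffOn ℝ (Icc 0 L) := uniqueDiffOn_Icc hL
  have hf : ContDiff ℝ 2 (rosierMode k l L) := contDiff_rosierMode k l L
  have hf1 : Differentiable ℝ (rosierMode k l L) := hf.differentiable two_ne_zero
  have hf2 : Differentiable ℝ (deriv (rosierMode k l L)) :=
    (hf.deriv' (n := 1)).differentiable one_ne_zero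
  have hderiv : EqOn (deriv (rosierMode k l L)) (fun _ ↦ 0) (Icc 0 L) := by
    simpa only [deriv_const'] using
      eqOn_deriv_of_eqOn hs (fun x _ ↦ hf1 x) (fun _ _ ↦ differentiableAt_const (0 : ℂ)) h
  have hderiv2 : deriv (deriv (rosierMode k l L)) 0 = 0 := by
    simpa only [deriv_const'] using
      eqOn_deriv_of_eqOn hs (fun x _ ↦ hf2 x) (fun _ _ ↦ differentiableAt_const (0 : ℂ)) hderiv
        (left_mem_Icc.mpr hL.le)
  rw [deriv_deriv_rosierMode_zero] at hderiv2
  have hkl' : (k : ℂ) + l ≠ 0 := by exact_mod_cast hkl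
  simp [hk, hl, hkl', hL.ne', Real.pi_ne_zero] at hderiv2

end Rosier

lemma pos_of_mem_criticalN {L : ℝ} (hL : L ∈ criticalN) : 0 < L := by
  obtain ⟨k, l, hk, hl, rfl⟩ := hL
  positivity

lemma exists_three_mul_sq_eq_of_mem_criticalN {L : ℝ} (hL : L ∈ criticalN) :
    ∃ k l : ℤ, 0 < k ∧ 0 < l ∧ 3 * L ^ 2 = 4 * Real.pi ^ 2 * (k ^ 2 + k * l + l ^ 2) := by
  obtain ⟨k, l, hk, hl, rfl⟩ := hL
  refine ⟨k, l, by exact_mod_cast hk, by exact_mod_cast hl, ?_⟩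
  rw [mul_pow, div_pow, Real.sq_sqrt (by positivity), Real.sq_sqrt (by positivity)]
  push_cast
  ring

/-- If `L ∈ 𝒩`, the spectral problem for the linearized Boussinesq system with boundary
conditions `θ(0) = θ(L) = θ′(0) = θ′(L) = 0`, `u(0) = u(L) = u′(L) = 0` admits a nontrivial
solution satisfying the additional condition `deriv (deriv θ) 0 = 0`. -/
theorem statement_4 (L : ℝ) (hLN : L ∈ criticalN) :
    ∃ (lam : ℂ) (θ u : ℝ → ℂ),
      ContDiff ℝ 3 θ ∧ ContDiff ℝ 3 u ∧
      ¬(∀ x ∈ Icc (0 : ℝ) L, θ x = 0 ∧ u x = 0) ∧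
      (∀ x ∈ Icc (0 : ℝ) L, -deriv u x - deriv (deriv (deriv u)) x = lam * θ x) ∧
      (∀ x ∈ Icc (0 : ℝ) L, -deriv θ x - deriv (deriv (deriv θ)) x = lam * u x) ∧
      θ 0 = 0 ∧ θ L = 0 ∧ deriv θ 0 = 0 ∧ deriv θ L = 0 ∧
      u 0 = 0 ∧ u L = 0 ∧ deriv u L = 0 ∧
      deriv (deriv θ) 0 = 0 := by
  have hL : 0 < L := pos_of_mem_criticalN hLN
  obtain ⟨k, l, hk, hl, hLkl⟩ := exists_three_mul_sq_eq_of_mem_criticalN hLN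
  have hf : ContDiff ℝ 3 (rosierMode k l L) := contDiff_rosierMode k l L
  have hf' : Differentiable ℝ (rosierMode k l L) := hf.differentiable three_ne_zero
  have hfeig := kdvOp_rosierMode hL.ne' hLkl
  obtain ⟨ζ, hζ, hquasi⟩ := exists_rosierMode_add k l hL.ne'
  obtain ⟨hfL, hf_neg⟩ := eq_zero_and_neg_eq_zero_of_add_eq_mul hζ hquasi (rosierMode_zero k l L)
  obtain ⟨hfL', hf_neg'⟩ := eq_zero_and_neg_eq_zero_of_add_eq_mul hζ (deriv_add_eq_mul hquasi)
    (deriv_rosierMode_zero k l L)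
  refine ⟨rosierEigenvalue k l L, oddPart (rosierMode k l L), evenPart (rosierMode k l L),
    contDiff_oddPart hf, contDiff_evenPart hf, fun h ↦ ?_,
    fun x _ ↦ congr_fun (kdvOp_evenPart_of_eq_smul hf hfeig) x,
    fun x _ ↦ congr_fun (kdvOp_oddPart_of_eq_smul hf hfeig) x,
    oddPart_zero _, oddPart_eq_zero hfL hf_neg, ?_, ?_, ?_,
    evenPart_eq_zero hfL hf_neg, ?_, ?_⟩
  · obtain ⟨x, hx, hne⟩ := exists_rosierMode_ne_zero hk.ne' hl.ne' (by lia) hL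
    exact hne (by rw [← evenPart_add_oddPart (rosierMode k l L), (h x hx).1, (h x hx).2, add_zero])
  · rw [deriv_oddPart hf', evenPart_zero, deriv_rosierMode_zero]
  · rw [deriv_oddPart hf', evenPart_eq_zero hfL' hf_neg']
  · rw [evenPart_zero, rosierMode_zero]
  · rw [deriv_evenPart hf', oddPart_eq_zero hfL' hf_neg']
  · rw [deriv_deriv_oddPart (hf.of_le (by norm_num)), oddPart_zero]
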